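/- Let ρ_ψ be any 2×2 complex matrix with entries ρ_ψ^{ij} and ρ̃_e any 4×4 complex matrix with 2×2 blocks ρ̃_{e,11}, ρ̃_{e,12}, ρ̃_{e,21}, ρ̃_{e,22}. With ρ₁ = ρ_ψ ⊗ ρ̃_e, ρ₂ = (CNOT ⊗ I₂) ρ₁ (CNOT ⊗ I₂)†, ρ₃ = (H ⊗ I₄) ρ₂ (H ⊗ I₄)†, the projection onto Alice's measurement outcome |10⟩ satisfies Π₁₀ ρ₃ Π₁₀† = |10⟩⟨10| ⊗ (1/2)·( ρ_ψ^{11}·ρ̃_{e,11} − ρ_ψ^{12}·ρ̃_{e,12} − ρ_ψ^{21}·ρ̃_{e,21} + ρ_ψ^{22}·ρ̃_{e,22} ); Bob's corrected (unnormalized) state for outcome 10 is Z·( ρ_ψ^{11}ρ̃_{e,11} − ρ_ψ^{12}ρ̃_{e,12} − ρ_ψ^{21}ρ̃_{e,21} + ρ_ψ^{22}ρ̃_{e,22} )·Z† up to the normalization factor 2. -/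

import Mathlib

open Matrix Kronecker Complex

noncomputable section

def PX : Matrix (Fin 2) (Fin 2) ℂ := !![0, 1; 1, 0]
def PZ : Matrix (Fin 2) (Fin 2) ℂ := !![1, 0; 0, -1]
def I2 : Matrix (Fin 2) (Fin 2) ℂ := 1

/-- Controlled-NOT gate. -/
def CNOT : Matrix (Fin 4) (Fin 4) ℂ :=
  !![1, 0, 0, 0; 0, 1, 0, 0; 0, 0, 0, 1; 0, 0, 1, 0]

/-- Hadamard gate. -/
def Hgate : Matrix (Fin 2) (Fin 2) ℂ := ((Real.sqrt 2 : ℂ))⁻¹ • !![1, 1; 1, -1]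

/-- Two-qubit standard basis vectors |ij⟩. -/
def ket2 (i j : Fin 2) : Fin 4 → ℂ := fun k => if (k : ℕ) = 2 * (i : ℕ) + (j : ℕ) then 1 else 0

/-- Kronecker product, flattened to `Fin (m*n)` indices (row-major). -/
def kron {m n : ℕ} (A : Matrix (Fin m) (Fin m) ℂ) (B : Matrix (Fin n) (Fin n) ℂ) :
    Matrix (Fin (m * n)) (Fin (m * n)) ℂ :=
  Matrix.reindex finProdFinEquiv finProdFinEquiv (A ⊗ₖ B)

/-- Projector Π_{ij} = |ij⟩⟨ij| ⊗ I₂ onto Alice's measurement outcome ij. -/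
def Pi2 (i j : Fin 2) : Matrix (Fin 8) (Fin 8) ℂ :=
  kron (vecMulVec (ket2 i j) (star (ket2 i j))) I2

/-- The 2×2 block of a 4×4 matrix in (block-)position (a,b). -/
def blk (ρ : Matrix (Fin 4) (Fin 4) ℂ) (a b : Fin 2) : Matrix (Fin 2) (Fin 2) ℂ :=
  Matrix.of fun i j =>
    ρ ⟨2 * (a : ℕ) + (i : ℕ), by have := a.isLt; have := i.isLt; omega⟩
      ⟨2 * (b : ℕ) + (j : ℕ), by have := b.isLt; have := j.isLt; omega⟩

/-- Global state after Alice's CNOT and Hadamard gates in the teleportation circuit. -/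
def rho3 (ρψ : Matrix (Fin 2) (Fin 2) ℂ) (ρe : Matrix (Fin 4) (Fin 4) ℂ) :
    Matrix (Fin 8) (Fin 8) ℂ :=
  kron Hgate (1 : Matrix (Fin 4) (Fin 4) ℂ) *
    (kron CNOT I2 * kron ρψ ρe * (kron CNOT I2)ᴴ) *
    (kron Hgate (1 : Matrix (Fin 4) (Fin 4) ℂ))ᴴ

/-! Controlled on the qubit to be sent, the CNOT gate shifts Alice's half of the pair:
`CNOT = ∑ a, |a⟩⟨a| ⊗ Xᵃ`. Conditioned on Alice observing `ij`, the circuit therefore acts by the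
Kraus operator `∑ a, H i a • |i⟩⟨a| ⊗ |j⟩⟨j + a| ⊗ I₂`. Conjugating `ρψ ⊗ ρe` by it, the term
indexed by `(a, b)` picks the entry `ρψ a b` and the block `(j + a, j + b)` of `ρe`, weighted by
`H i a * star (H i b) = (-1) ^ (i * (a + b)) / 2`. -/

lemma kron_apply {m n : ℕ} (A : Matrix (Fin m) (Fin m) ℂ) (B : Matrix (Fin n) (Fin n) ℂ)
    (i j : Fin (m * n)) :
    kron A B i j = A i.divNat j.divNat * B i.modNat j.modNat := rfl

lemma kron_mul_kron {m n : ℕ} (A C : Matrix (Fin m) (Fin m) ℂ) (B D : Matrix (Fin n) (Fin n) ℂ) :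
    kron A B * kron C D = kron (A * C) (B * D) := by
  simp only [kron, reindex_apply, submatrix_mul_equiv, mul_kronecker_mul]

lemma conjTranspose_kron {m n : ℕ} (A : Matrix (Fin m) (Fin m) ℂ) (B : Matrix (Fin n) (Fin n) ℂ) :
    (kron A B)ᴴ = kron Aᴴ Bᴴ := by
  simp only [kron, conjTranspose_reindex, conjTranspose_kronecker]

lemma smul_kron {m n : ℕ} (c : ℂ) (A : Matrix (Fin m) (Fin m) ℂ) (B : Matrix (Fin n) (Fin n) ℂ) :
    kron (c • A) B = c • kron A B := by
  ext i j
  simp only [kron_apply, Matrix.smul_apply, smul_eq_mul, mul_assoc]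

lemma kron_smul {m n : ℕ} (c : ℂ) (A : Matrix (Fin m) (Fin m) ℂ) (B : Matrix (Fin n) (Fin n) ℂ) :
    kron A (c • B) = c • kron A B := by
  ext i j
  simp only [kron_apply, Matrix.smul_apply, smul_eq_mul, mul_left_comm]

lemma sum_kron {ι : Type*} {m n : ℕ} (s : Finset ι) (A : ι → Matrix (Fin m) (Fin m) ℂ)
    (B : Matrix (Fin n) (Fin n) ℂ) :
    kron (∑ a ∈ s, A a) B = ∑ a ∈ s, kron (A a) B := by
  ext i j
  simp only [kron_apply, Matrix.sum_apply, Finset.sum_mul]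

lemma kron_sum {ι : Type*} {m n : ℕ} (s : Finset ι) (A : Matrix (Fin m) (Fin m) ℂ)
    (B : ι → Matrix (Fin n) (Fin n) ℂ) :
    kron A (∑ a ∈ s, B a) = ∑ a ∈ s, kron A (B a) := by
  ext i j
  simp only [kron_apply, Matrix.sum_apply, Finset.mul_sum]

lemma kron_assoc {l m n : ℕ} (A : Matrix (Fin l) (Fin l) ℂ) (B : Matrix (Fin m) (Fin m) ℂ)
    (C : Matrix (Fin n) (Fin n) ℂ) :
    kron (kron A B) C =
      (kron A (kron B C)).submatrix (Fin.cast (mul_assoc l m n)) (Fin.cast (mul_assoc l m n)) := by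
  have divNat_divNat (i : Fin (l * m * n)) :
      i.divNat.divNat = (i.cast (mul_assoc l m n)).divNat :=
    Fin.ext (by simp [Nat.div_div_eq_div_mul, mul_comm])
  have modNat_divNat (i : Fin (l * m * n)) :
      i.divNat.modNat = (i.cast (mul_assoc l m n)).modNat.divNat :=
    Fin.ext (by simp [Nat.mod_mul_left_div_self])
  have modNat_modNat (i : Fin (l * m * n)) :
      i.modNat = (i.cast (mul_assoc l m n)).modNat.modNat :=
    Fin.ext (by simp)
  ext i j
  simp only [kron_apply, submatrix_apply, divNat_divNat, modNat_divNat, modNat_modNat,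
    mul_assoc]

-- Both index types compute to `Fin 8`, so the casts in `kron_assoc` are definitionally trivial.
lemma kron_assoc_qubits (A B C : Matrix (Fin 2) (Fin 2) ℂ) :
    (kron (kron A B : Matrix (Fin 4) (Fin 4) ℂ) C : Matrix (Fin 8) (Fin 8) ℂ) =
      kron A (kron B C : Matrix (Fin 4) (Fin 4) ℂ) :=
  kron_assoc A B C

lemma vecMulVec_ket2 (i j : Fin 2) :
    vecMulVec (ket2 i j) (star (ket2 i j)) = kron (single i i 1) (single j j 1) := by
  ext k l
  refine Eq.trans ?_ (kron_apply (m := 2) (n := 2) _ _ k l).symm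
  fin_cases i <;> fin_cases j <;> fin_cases k <;> fin_cases l <;>
    simp [ket2, vecMulVec_apply, Fin.divNat, Fin.modNat]

lemma CNOT_eq_sum : CNOT = ∑ a : Fin 2, kron (single a a 1) (PX ^ (a : ℕ)) := by
  rw [Fin.sum_univ_two]
  ext k l
  refine Eq.trans ?_ (congrArg₂ (· + ·) (kron_apply (m := 2) (n := 2) _ _ k l).symm
    (kron_apply (m := 2) (n := 2) _ _ k l).symm)
  fin_cases k <;> fin_cases l <;>
    simp [CNOT, PX, Fin.divNat, Fin.modNat]

lemma single_mul_PX_pow (i j a : Fin 2) :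
    single i j 1 * PX ^ (a : ℕ) = single i (j + a) 1 := by
  ext k l
  fin_cases i <;> fin_cases j <;> fin_cases a <;> fin_cases k <;> fin_cases l <;>
    simp [PX, single_apply, mul_apply]

lemma Hgate_mul_star_Hgate (i a b : Fin 2) :
    Hgate i a * star (Hgate i b) = 2⁻¹ * (-1) ^ ((i : ℕ) * (a + b)) := by
  have hsqrt : (Real.sqrt 2 : ℂ)⁻¹ * (Real.sqrt 2 : ℂ)⁻¹ = 2⁻¹ := by
    rw [← mul_inv, ← Complex.ofReal_mul, Real.mul_self_sqrt zero_le_two, Complex.ofReal_ofNat]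
  fin_cases i <;> fin_cases a <;> fin_cases b <;> simp [Hgate, hsqrt]

lemma sum_kron_single_blk (ρ : Matrix (Fin 4) (Fin 4) ℂ) :
    ∑ k, ∑ l, kron (single k l 1) (blk ρ k l) = ρ := by
  ext i j
  have hblk : blk ρ (Fin.divNat (n := 2) i) (Fin.divNat (n := 2) j) (Fin.modNat (n := 2) i)
      (Fin.modNat (n := 2) j) = ρ i j := by
    simp only [blk, of_apply, Fin.coe_divNat, Fin.coe_modNat, Nat.div_add_mod, Fin.eta]
  have happly (k l : Fin 2) : (kron (single k l 1) (blk ρ k l) : Matrix (Fin 4) (Fin 4) ℂ) i j =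
      if k = Fin.divNat (n := 2) i ∧ l = Fin.divNat (n := 2) j then ρ i j else 0 := by
    refine (kron_apply (m := 2) (n := 2) _ _ i j).trans ?_
    rw [single_apply, ite_mul, one_mul, zero_mul]
    split_ifs with h
    · rw [h.1, h.2, hblk]
    · rfl
  simp only [Matrix.sum_apply]
  refine (Finset.sum_congr rfl fun k _ => Finset.sum_congr rfl fun l _ => happly k l).trans ?_
  simp [ite_and]

lemma kron_single_mul_mul_conjTranspose (ρ : Matrix (Fin 4) (Fin 4) ℂ) (i j k l : Fin 2) :
    kron (single i k 1) I2 * ρ * (kron (single j l 1) I2)ᴴ = kron (single i j 1) (blk ρ k l) := by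
  have hblock (k' l' : Fin 2) :
      (kron (single i k 1) I2 * kron (single k' l' 1) (blk ρ k' l') * (kron (single j l 1) I2)ᴴ :
        Matrix (Fin 4) (Fin 4) ℂ) =
      (single k' l' 1 : Matrix (Fin 2) (Fin 2) ℂ) k l • kron (single i j 1) (blk ρ k' l') := by
    rw [conjTranspose_kron, kron_mul_kron, kron_mul_kron, conjTranspose_single, star_one,
      single_mul_mul_single, one_mul, mul_one, I2, conjTranspose_one, Matrix.one_mul,
      Matrix.mul_one, ← smul_kron, smul_single, smul_eq_mul, mul_one]
  conv_lhs => rw [← sum_kron_single_blk ρ]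
  simp only [Finset.mul_sum, Finset.sum_mul]
  refine (Finset.sum_congr rfl fun k' _ => Finset.sum_congr rfl fun l' _ => hblock k' l').trans ?_
  simp [single_apply, ite_and]

/-- The Kraus operator of Alice's measurement outcome `ij`: the evolution of the three qubits
through the circuit, conditioned on that outcome. -/
def kraus (i j : Fin 2) : Matrix (Fin 8) (Fin 8) ℂ :=
  Pi2 i j * kron Hgate (1 : Matrix (Fin 4) (Fin 4) ℂ) * kron CNOT I2

lemma Pi2_mul_rho3_mul_conjTranspose (ρψ : Matrix (Fin 2) (Fin 2) ℂ)
    (ρe : Matrix (Fin 4) (Fin 4) ℂ) (i j : Fin 2) :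
    Pi2 i j * rho3 ρψ ρe * (Pi2 i j)ᴴ = kraus i j * kron ρψ ρe * (kraus i j)ᴴ := by
  simp only [kraus, rho3, conjTranspose_mul, Matrix.mul_assoc]

lemma kraus_eq_sum (i j : Fin 2) :
    kraus i j = ∑ a, Hgate i a •
      kron (single i a 1) (kron (single j (j + a) 1) I2 : Matrix (Fin 4) (Fin 4) ℂ) := by
  have hPi : Pi2 i j =
      kron (single i i 1) (kron (single j j 1) I2 : Matrix (Fin 4) (Fin 4) ℂ) := by
    rw [Pi2, vecMulVec_ket2, kron_assoc_qubits]
  have hCNOT : (kron CNOT I2 : Matrix (Fin 8) (Fin 8) ℂ) = ∑ a : Fin 2,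
      kron (single a a 1) (kron (PX ^ (a : ℕ)) I2 : Matrix (Fin 4) (Fin 4) ℂ) := by
    rw [CNOT_eq_sum, sum_kron]
    exact Finset.sum_congr rfl fun a _ => kron_assoc_qubits _ _ _
  rw [kraus, hPi, hCNOT, kron_mul_kron, Matrix.mul_one, Finset.mul_sum]
  refine Finset.sum_congr rfl fun a _ => ?_
  rw [kron_mul_kron, kron_mul_kron, single_mul_mul_single, single_mul_PX_pow,
    ← smul_kron, smul_single, one_mul, mul_one, smul_eq_mul, mul_one, I2, Matrix.one_mul]

lemma kron_single_mul_kron_mul_conjTranspose (A : Matrix (Fin 2) (Fin 2) ℂ)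
    (ρ : Matrix (Fin 4) (Fin 4) ℂ) (i j k l a b : Fin 2) :
    (kron (single i a 1) (kron (single j k 1) I2 : Matrix (Fin 4) (Fin 4) ℂ) * kron A ρ *
      (kron (single i b 1) (kron (single j l 1) I2 : Matrix (Fin 4) (Fin 4) ℂ))ᴴ :
        Matrix (Fin 8) (Fin 8) ℂ) =
      kron (vecMulVec (ket2 i j) (star (ket2 i j))) (A a b • blk ρ k l) := by
  rw [conjTranspose_kron (n := 4), kron_mul_kron, kron_mul_kron, conjTranspose_single, star_one,
    single_mul_mul_single, one_mul, mul_one, kron_single_mul_mul_conjTranspose, vecMulVec_ket2,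
    kron_assoc_qubits, kron_smul, kron_smul, ← smul_kron, smul_single, smul_eq_mul, mul_one]

theorem teleportation_outcome_10_general (ρψ : Matrix (Fin 2) (Fin 2) ℂ)
    (ρe : Matrix (Fin 4) (Fin 4) ℂ) (i j : Fin 2) :
    Pi2 i j * rho3 ρψ ρe * (Pi2 i j)ᴴ =
      kron (vecMulVec (ket2 i j) (star (ket2 i j)))
        ((2 : ℂ)⁻¹ • ∑ a : Fin 2, ∑ b : Fin 2, (-1 : ℂ) ^ ((i : ℕ) * (a + b)) •
          ρψ a b • blk ρe (j + a) (j + b)) := by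
  rw [Pi2_mul_rho3_mul_conjTranspose, kraus_eq_sum]
  simp only [conjTranspose_sum, conjTranspose_smul, Finset.sum_mul, Finset.mul_sum,
    Matrix.smul_mul, Matrix.mul_smul, smul_smul, Finset.smul_sum, kron_sum]
  rw [Finset.sum_comm]
  refine Finset.sum_congr rfl fun a _ => Finset.sum_congr rfl fun b _ => ?_
  rw [kron_single_mul_kron_mul_conjTranspose, mul_comm (star _), Hgate_mul_star_Hgate,
    ← kron_smul, smul_smul, mul_assoc]

theorem teleportation_outcome_10 (ρψ : Matrix (Fin 2) (Fin 2) ℂ)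
    (ρe : Matrix (Fin 4) (Fin 4) ℂ) :
    Pi2 1 0 * rho3 ρψ ρe * (Pi2 1 0)ᴴ =
      kron (vecMulVec (ket2 1 0) (star (ket2 1 0)))
        (((2 : ℂ))⁻¹ • (ρψ 0 0 • blk ρe 0 0 - ρψ 0 1 • blk ρe 0 1
          - ρψ 1 0 • blk ρe 1 0 + ρψ 1 1 • blk ρe 1 1)) := by
  rw [teleportation_outcome_10_general]
  simp [Fin.sum_univ_two, sub_eq_add_neg, add_assoc]

end
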